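/- Every properly infinite positive element h of a von Neumann algebra M is Kadison–Pedersen equivalent to a projection: there exists p ∈ P(M) with h ≈ p. -/

import Mathlib

open ContinuousLinearMap Filter Topology

universe u

noncomputable section

variable {H : Type u} [NormedAddCommGroup H] [InnerProductSpace ℂ H] [CompleteSpace H]

/-- `p` is an (orthogonal) projection belonging to the von Neumann algebra `M`. -/
def IsProjIn (M : VonNeumannAlgebra H) (p : H →L[ℂ] H) : Prop :=
  p ∈ M ∧ IsSelfAdjoint p ∧ p * p = p

/-- Murray–von Neumann equivalence of `p` and `q` relative to `M`:
there is a partial isometry `v ∈ M` with `v* v = p` and `v v* = q`. -/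
def MvNEquiv (M : VonNeumannAlgebra H) (p q : H →L[ℂ] H) : Prop :=
  ∃ v ∈ M, adjoint v * v = p ∧ v * adjoint v = q

/-- The order on projections: `p ≤ q` iff `p q = p = q p`. -/
def ProjLE (p q : H →L[ℂ] H) : Prop := p * q = p ∧ q * p = p

/-- Murray–von Neumann subequivalence `p ≼ q`: `p` is equivalent to a subprojection of `q`. -/
def SubEquiv (M : VonNeumannAlgebra H) (p q : H →L[ℂ] H) : Prop :=
  ∃ r, IsProjIn M r ∧ MvNEquiv M p r ∧ ProjLE r q

/-- `z` is a central projection of `M`. -/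
def IsCentralProj (M : VonNeumannAlgebra H) (z : H →L[ℂ] H) : Prop :=
  IsProjIn M z ∧ ∀ x ∈ M, z * x = x * z

/-- A projection `p` is finite: `p ∼ q ≤ p` implies `q = p`. -/
def FiniteProj (M : VonNeumannAlgebra H) (p : H →L[ℂ] H) : Prop :=
  ∀ q, IsProjIn M q → ProjLE q p → MvNEquiv M p q → q = p

/-- A projection `p` is properly infinite: it is a countably infinite sum of pairwise
orthogonal projections, each equivalent to `p`. -/
def ProperlyInfiniteProj (M : VonNeumannAlgebra H) (p : H →L[ℂ] H) : Prop :=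
  p ≠ 0 ∧ ∃ e : ℕ → H →L[ℂ] H, (∀ n, IsProjIn M (e n)) ∧
    (Pairwise fun m n => e m * e n = 0) ∧ (∀ n, MvNEquiv M (e n) p) ∧
    ∀ ξ : H, HasSum (fun n => e n ξ) (p ξ)

/-- `z` is the central support of `h`: the smallest central projection with `z h = h`. -/
def IsCentralSupport (M : VonNeumannAlgebra H) (h z : H →L[ℂ] H) : Prop :=
  IsCentralProj M z ∧ z * h = h ∧ ∀ w, IsCentralProj M w → w * h = h → z * w = z

/-- The projection `e` is σ-finite relative to `M`: every family of pairwise orthogonal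
nonzero subprojections of `e` in `M` is countable. -/
def SigmaFiniteProj (M : VonNeumannAlgebra H) (e : H →L[ℂ] H) : Prop :=
  ∀ S : Set (H →L[ℂ] H), (∀ q ∈ S, IsProjIn M q ∧ q ≠ 0 ∧ ProjLE q e) →
    (S.Pairwise fun a b => a * b = 0) → S.Countable

/-- Kadison–Pedersen equivalence on the positive cone: `h ≈ k` iff there is a family
`{x_α} ⊆ M` with `h = Σ x_α* x_α` and `k = Σ x_α x_α*` (sums in the strong topology). -/
def KPEquiv (M : VonNeumannAlgebra H) (h k : H →L[ℂ] H) : Prop :=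
  ∃ (ι : Type u) (x : ι → H →L[ℂ] H), (∀ i, x i ∈ M) ∧
    (∀ ξ : H, HasSum (fun i => (adjoint (x i) * x i) ξ) (h ξ)) ∧
    (∀ ξ : H, HasSum (fun i => (x i * adjoint (x i)) ξ) (k ξ))

/-- Operator order: `a ≤ b` iff `b - a` is positive. -/
def OpLE (a b : H →L[ℂ] H) : Prop := (b - a).IsPositive

/-- `h ∈ M₊` is finite in the Kadison–Pedersen sense: `h ≈ k ≤ h` implies `k = h`. -/
def KPFinite (M : VonNeumannAlgebra H) (h : H →L[ℂ] H) : Prop :=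
  ∀ k, k ∈ M → k.IsPositive → OpLE k h → KPEquiv M h k → k = h

/-- `h ∈ M₊` is properly infinite: `z h` is finite and nonzero for no central projection `z`. -/
def KPProperlyInfinite (M : VonNeumannAlgebra H) (h : H →L[ℂ] H) : Prop :=
  h ≠ 0 ∧ ∀ z, IsCentralProj M z → KPFinite M (z * h) → z * h = 0

/-- The set of projections of `M`. -/
def ProjSet (M : VonNeumannAlgebra H) := {p : H →L[ℂ] H // IsProjIn M p}

/-- The strong operator topology on the projections of `M` (topology of pointwise convergence). -/
instance (M : VonNeumannAlgebra H) : TopologicalSpace (ProjSet M) :=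
  TopologicalSpace.induced (fun p : ProjSet M => (fun ξ => p.1 ξ : H → H)) inferInstance

/-- The quotient `P(M)/∼` of the projections of `M` by Murray–von Neumann equivalence,
carrying the quotient (strong operator) topology. -/
abbrev PQuot (M : VonNeumannAlgebra H) :=
  Quot (fun p q : ProjSet M => MvNEquiv M p.1 q.1)

/-- The quotient map `P(M) → P(M)/∼`. -/
def pquotMk (M : VonNeumannAlgebra H) : ProjSet M → PQuot M := Quot.mk _

/-- The strong operator topology on `B(H)`. -/
def SOT : TopologicalSpace (H →L[ℂ] H) :=
  TopologicalSpace.induced (fun a : H →L[ℂ] H => (fun ξ => a ξ : H → H)) inferInstance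

/-- The order induced on `P(M)/∼` by Murray–von Neumann subequivalence. -/
def QLE (M : VonNeumannAlgebra H) (a b : PQuot M) : Prop :=
  ∃ p q : ProjSet M, a = pquotMk M p ∧ b = pquotMk M q ∧ SubEquiv M p.1 q.1


section KPHelpers
set_option linter.unusedSectionVars false

/-! ### Quadratic forms, order and strong sums -/

/-- The quadratic form of an operator. -/
def qf (a : H →L[ℂ] H) (ξ : H) : ℝ := (inner ℂ (a ξ) ξ).re

lemma qf_add (a b : H →L[ℂ] H) (ξ : H) : qf (a + b) ξ = qf a ξ + qf b ξ := by
  simp [qf]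

lemma qf_sub (a b : H →L[ℂ] H) (ξ : H) : qf (a - b) ξ = qf a ξ - qf b ξ := by
  simp [qf]

lemma qf_zero (ξ : H) : qf (0 : H →L[ℂ] H) ξ = 0 := by simp [qf]

lemma qf_smul (c : ℝ) (a : H →L[ℂ] H) (ξ : H) : qf ((c : ℂ) • a) ξ = c * qf a ξ := by
  simp [qf]

lemma qf_sum {ι : Type*} (F : Finset ι) (a : ι → H →L[ℂ] H) (ξ : H) :
    qf (∑ i ∈ F, a i) ξ = ∑ i ∈ F, qf (a i) ξ := by
  simp [qf]

lemma qf_star_mul (x : H →L[ℂ] H) (ξ : H) : qf (star x * x) ξ = ‖x ξ‖ ^ 2 := by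
  change (inner ℂ (adjoint x (x ξ)) ξ).re = _
  rw [adjoint_inner_left]
  exact inner_self_eq_norm_sq (𝕜 := ℂ) (x ξ)

lemma qf_mul_star (x : H →L[ℂ] H) (ξ : H) : qf (x * star x) ξ = ‖(star x) ξ‖ ^ 2 := by
  simpa using qf_star_mul (star x) ξ

lemma nonneg_iff_qf {a : H →L[ℂ] H} (ha : IsSelfAdjoint a) : 0 ≤ a ↔ ∀ ξ, 0 ≤ qf a ξ := by
  rw [nonneg_iff_isPositive, isPositive_def']
  exact ⟨fun h => h.2, fun h => ⟨ha, h⟩⟩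

lemma qf_nonneg {a : H →L[ℂ] H} (ha : 0 ≤ a) (ξ : H) : 0 ≤ qf a ξ :=
  (nonneg_iff_qf (IsSelfAdjoint.of_nonneg ha)).1 ha ξ

lemma le_iff_qf {a b : H →L[ℂ] H} (ha : IsSelfAdjoint a) (hb : IsSelfAdjoint b) :
    a ≤ b ↔ ∀ ξ, qf a ξ ≤ qf b ξ := by
  rw [← sub_nonneg, nonneg_iff_qf (hb.sub ha)]
  simp [qf_sub]

lemma qf_mono {a b : H →L[ℂ] H} (h : a ≤ b) (ξ : H) : qf a ξ ≤ qf b ξ := by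
  have := qf_nonneg (sub_nonneg.2 h) ξ
  rw [qf_sub] at this; linarith

lemma eq_of_qf {a b : H →L[ℂ] H} (ha : 0 ≤ a) (hb : 0 ≤ b) (h : ∀ ξ, qf a ξ = qf b ξ) : a = b :=
  le_antisymm
    ((le_iff_qf (.of_nonneg ha) (.of_nonneg hb)).2 fun ξ => (h ξ).le)
    ((le_iff_qf (.of_nonneg hb) (.of_nonneg ha)).2 fun ξ => (h ξ).ge)

lemma sqrt_props {a : H →L[ℂ] H} (ha : 0 ≤ a) :
    star (CFC.sqrt a) = CFC.sqrt a ∧ CFC.sqrt a * CFC.sqrt a = a :=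
  ⟨(IsSelfAdjoint.of_nonneg (CFC.sqrt_nonneg a)).star_eq, CFC.sqrt_mul_sqrt_self a ha⟩

lemma norm_sqrt_apply {a : H →L[ℂ] H} (ha : 0 ≤ a) (ξ : H) :
    ‖CFC.sqrt a ξ‖ ^ 2 = qf a ξ := by
  rw [← qf_star_mul, (sqrt_props ha).1, (sqrt_props ha).2]

lemma norm_apply_sq_le {a : H →L[ℂ] H} (ha : 0 ≤ a) (ξ : H) :
    ‖a ξ‖ ^ 2 ≤ ‖a‖ * qf a ξ := by
  obtain ⟨h1, h2⟩ := sqrt_props ha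
  set s := CFC.sqrt a with hs
  have h3 : ‖a‖ = ‖s‖ * ‖s‖ := by
    rw [← CStarRing.norm_star_mul_self, h1, h2]
  rw [← norm_sqrt_apply ha, ← hs, h3]
  have h4 : a ξ = s (s ξ) := congrArg (fun A : H →L[ℂ] H => A ξ) h2.symm
  rw [h4]
  have := s.le_opNorm (s ξ)
  calc ‖s (s ξ)‖ ^ 2 ≤ (‖s‖ * ‖s ξ‖) ^ 2 := by gcongr
    _ = _ := by ring

lemma hasSum_of_qf {ι : Type*} {a : ι → H →L[ℂ] H} {h : H →L[ℂ] H} (ha : ∀ i, 0 ≤ a i)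
    (hh : 0 ≤ h) (hs : ∀ ξ, HasSum (fun i => qf (a i) ξ) (qf h ξ)) (ξ : H) :
    HasSum (fun i => a i ξ) (h ξ) := by
  have hle : ∀ F : Finset ι, ∑ i ∈ F, a i ≤ h := fun F => by
    refine (le_iff_qf (.of_nonneg (Finset.sum_nonneg fun i _ => ha i)) (.of_nonneg hh)).2 fun ξ => ?_
    rw [qf_sum]
    exact sum_le_hasSum F (fun i _ => qf_nonneg (ha i) ξ) (hs ξ)
  have key : ∀ F : Finset ι, ‖∑ i ∈ F, a i ξ - h ξ‖ ^ 2 ≤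
      ‖h‖ * (qf h ξ - ∑ i ∈ F, qf (a i) ξ) := fun F => by
    have h0 : 0 ≤ h - ∑ i ∈ F, a i := sub_nonneg.2 (hle F)
    have h1 := norm_apply_sq_le h0 ξ
    have h2 : ‖h - ∑ i ∈ F, a i‖ ≤ ‖h‖ := by
      apply CStarAlgebra.norm_le_norm_of_nonneg_of_le h0
      exact sub_le_self _ (Finset.sum_nonneg fun i _ => ha i)
    have h3 : 0 ≤ qf (h - ∑ i ∈ F, a i) ξ := qf_nonneg h0 ξ
    rw [norm_sub_rev]
    have h4 : (h - ∑ i ∈ F, a i) ξ = h ξ - ∑ i ∈ F, a i ξ := by simp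
    rw [h4] at h1
    refine h1.trans ?_
    rw [← qf_sum, ← qf_sub]
    gcongr
  have t1 : Tendsto (fun F : Finset ι => ‖h‖ * (qf h ξ - ∑ i ∈ F, qf (a i) ξ)) atTop (𝓝 0) := by
    have : Tendsto (fun F : Finset ι => ∑ i ∈ F, qf (a i) ξ) atTop (𝓝 (qf h ξ)) := hs ξ
    simpa using ((tendsto_const_nhds (x := qf h ξ)).sub this).const_mul ‖h‖
  have t2 := squeeze_zero (fun F => by positivity) key t1
  have t3 : Tendsto (fun F : Finset ι => ‖∑ i ∈ F, a i ξ - h ξ‖) atTop (𝓝 0) := by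
    have := t2.sqrt
    simpa using this
  change Tendsto (fun F : Finset ι => ∑ i ∈ F, a i ξ) atTop (𝓝 (h ξ))
  exact tendsto_iff_norm_sub_tendsto_zero.2 t3

lemma qf_of_hasSum {ι : Type*} {a : ι → H →L[ℂ] H} {h : H →L[ℂ] H} {ξ : H}
    (hs : HasSum (fun i => a i ξ) (h ξ)) : HasSum (fun i => qf (a i) ξ) (qf h ξ) := by
  have h1 := hs.mapL ((innerSL ℂ ξ).restrictScalars ℝ)
  have h2 := h1.mapL Complex.reCLM
  convert h2 using 1
  · ext i; simp only [qf]; exact (inner_re_symm (𝕜 := ℂ) _ _)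
  · simp only [qf]; exact (inner_re_symm (𝕜 := ℂ) _ _)

lemma mem_vN_iff {M : VonNeumannAlgebra H} {x : H →L[ℂ] H} :
    x ∈ M ↔ ∀ T ∈ M.commutant, T * x = x * T := by
  conv_lhs => rw [← VonNeumannAlgebra.commutant_commutant M]
  rw [VonNeumannAlgebra.mem_commutant_iff]

lemma comm_of_mem {M : VonNeumannAlgebra H} {x T : H →L[ℂ] H} (hx : x ∈ M)
    (hT : T ∈ M.commutant) : T * x = x * T := mem_vN_iff.1 hx T hT

lemma comm_apply {M : VonNeumannAlgebra H} {x T : H →L[ℂ] H} (hx : x ∈ M)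
    (hT : T ∈ M.commutant) (ξ : H) : T (x ξ) = x (T ξ) :=
  congrArg (fun A : H →L[ℂ] H => A ξ) (comm_of_mem hx hT)

lemma smul_mem_vN {M : VonNeumannAlgebra H} {x : H →L[ℂ] H} (c : ℂ) (hx : x ∈ M) : c • x ∈ M :=
  M.toStarSubalgebra.smul_mem hx c

lemma sqrt_mem {M : VonNeumannAlgebra H} {a : H →L[ℂ] H} (ha : a ∈ M) : CFC.sqrt a ∈ M := by
  rw [mem_vN_iff]
  intro T hT
  have : Commute a T := (comm_of_mem ha hT).symm
  exact (Commute.cfcₙ_nnreal this NNReal.sqrt).eq.symm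

/-- Bounded sums of positive operators converge. -/
lemma exists_strong_sum {M : VonNeumannAlgebra H} {ι : Type*} {a : ι → H →L[ℂ] H} {h : H →L[ℂ] H}
    (haM : ∀ i, a i ∈ M) (ha : ∀ i, 0 ≤ a i) (hle : ∀ F : Finset ι, ∑ i ∈ F, a i ≤ h) :
    ∃ b ∈ M, 0 ≤ b ∧ b ≤ h ∧ ∀ ξ, HasSum (fun i => qf (a i) ξ) (qf b ξ) := by
  have hh : 0 ≤ h := by simpa using hle ∅
  have hn : ∀ F : Finset ι, 0 ≤ ∑ i ∈ F, a i := fun F => Finset.sum_nonneg fun i _ => ha i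
  have hF : ∀ F : Finset ι, ‖∑ i ∈ F, a i‖ ≤ ‖h‖ := fun F =>
    CStarAlgebra.norm_le_norm_of_nonneg_of_le (hn F) (hle F)
  have hq : ∀ ξ, Summable fun i => qf (a i) ξ := fun ξ => by
    refine summable_of_sum_le (c := qf h ξ) (fun i => qf_nonneg (ha i) ξ) fun F => ?_
    rw [← qf_sum]; exact qf_mono (hle F) ξ
  have hsum : ∀ ξ, Summable fun i => a i ξ := fun ξ => by
    rw [summable_iff_vanishing_norm]
    intro ε hε
    obtain ⟨s, hs⟩ := (summable_iff_vanishing_norm.1 (hq ξ)) (ε ^ 2 / (‖h‖ + 1)) (by positivity)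
    refine ⟨s, fun t ht => ?_⟩
    have h1 := norm_apply_sq_le (hn t) ξ
    have h2 := hs t ht
    rw [← qf_sum, Real.norm_eq_abs, abs_of_nonneg (qf_nonneg (hn t) ξ)] at h2
    have h3 : (∑ i ∈ t, a i) ξ = ∑ i ∈ t, a i ξ := by simp
    rw [h3] at h1
    have h4 : ‖∑ i ∈ t, a i ξ‖ ^ 2 < ε ^ 2 := by
      calc _ ≤ _ := h1
        _ ≤ (‖h‖ + 1) * qf (∑ i ∈ t, a i) ξ := by
          have := qf_nonneg (hn t) ξ
          gcongr; linarith [hF t]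
        _ < (‖h‖ + 1) * (ε ^ 2 / (‖h‖ + 1)) := by gcongr
        _ = ε ^ 2 := by field_simp
    exact lt_of_pow_lt_pow_left₀ 2 hε.le h4
  let L : H →ₗ[ℂ] H :=
    { toFun := fun ξ => ∑' i, a i ξ
      map_add' := fun ξ η => by simp only [map_add]; exact (hsum ξ).tsum_add (hsum η)
      map_smul' := fun c ξ => by simp only [map_smul]; exact (hsum ξ).tsum_const_smul c }
  let b : H →L[ℂ] H := L.mkContinuous ‖h‖ (fun ξ => by
    have ht : Tendsto (fun F : Finset ι => ∑ i ∈ F, a i ξ) atTop (𝓝 (L ξ)) := (hsum ξ).hasSum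
    refine le_of_tendsto ht.norm (Eventually.of_forall fun F => ?_)
    have h3 : (∑ i ∈ F, a i) ξ = ∑ i ∈ F, a i ξ := by simp
    rw [← h3]
    exact ((∑ i ∈ F, a i).le_opNorm ξ).trans (by gcongr; exact hF F))
  have hb : ∀ ξ, HasSum (fun i => a i ξ) (b ξ) := fun ξ => (hsum ξ).hasSum
  have hqb : ∀ ξ, HasSum (fun i => qf (a i) ξ) (qf b ξ) := fun ξ => qf_of_hasSum (hb ξ)
  have hsa : IsSelfAdjoint b := by
    rw [isSelfAdjoint_iff_isSymmetric]
    intro ξ η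
    have h1 := (hb η).mapL (innerSL ℂ ξ)
    have h2 := ((hb ξ).mapL (innerSL ℂ η)).star
    have e : (fun i => star ((innerSL ℂ η) (a i ξ))) = fun i => (innerSL ℂ ξ) (a i η) := by
      ext i
      simp only [innerSL_apply_apply]
      have : star (inner ℂ η (a i ξ)) = inner ℂ (a i ξ) η := inner_conj_symm _ _
      rw [this]
      exact (isSelfAdjoint_iff_isSymmetric.1 (IsSelfAdjoint.of_nonneg (ha i))) ξ η
    rw [e] at h2
    have := h2.unique h1
    simp only [innerSL_apply_apply] at this
    refine Eq.trans ?_ this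
    exact (inner_conj_symm _ _).symm
  refine ⟨b, ?_, ?_, ?_, hqb⟩
  · rw [mem_vN_iff]
    intro T hT
    ext ξ
    have h1 := (hb ξ).mapL T
    have h2 := hb (T ξ)
    simp only [comm_apply (haM _) hT] at h1
    exact h1.unique h2
  · exact (nonneg_iff_qf hsa).2 fun ξ => (hqb ξ).nonneg fun i => qf_nonneg (ha i) ξ
  · refine (le_iff_qf hsa (.of_nonneg hh)).2 fun ξ => ?_
    refine hasSum_le_of_sum_le (hqb ξ) fun F => ?_
    rw [← qf_sum]; exact qf_mono (hle F) ξ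

/-- Douglas factorization inside a von Neumann algebra. -/
lemma douglas {M : VonNeumannAlgebra H} {A B : H →L[ℂ] H} (hA : A ∈ M) (hB : B ∈ M)
    (hAB : ∀ ξ, ‖A ξ‖ ≤ ‖B ξ‖) : ∃ C ∈ M, A = C * B := by
  let K : Submodule ℂ H := (LinearMap.range B.toLinearMap).topologicalClosure
  have hKc : IsClosed (K : Set H) := Submodule.isClosed_topologicalClosure _
  have : CompleteSpace K := hKc.completeSpace_coe
  have hBK : ∀ ξ, B ξ ∈ K := fun ξ =>
    Submodule.le_topologicalClosure _ (LinearMap.mem_range_self B.toLinearMap ξ)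
  let e : H →ₗ[ℂ] K := B.toLinearMap.codRestrict K hBK
  have hd : DenseRange e := by
    rw [DenseRange, dense_iff_closure_eq, Set.eq_univ_iff_forall]
    rintro ⟨x, hx⟩
    rw [closure_subtype]
    have : ((↑) '' Set.range e : Set H) = (LinearMap.range B.toLinearMap : Set H) := by
      ext y; simp [e]
    rw [this]
    exact hx
  have hnorm : ∃ C, ∀ x, ‖A.toLinearMap x‖ ≤ C * ‖e x‖ := ⟨1, fun x => by
    rw [one_mul]; exact hAB x⟩
  let C0 : K →L[ℂ] H := A.toLinearMap.extendOfNorm e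
  let C : H →L[ℂ] H := C0 ∘L K.orthogonalProjectionOnto
  have hCB : ∀ ξ, C (B ξ) = A ξ := fun ξ => by
    have h1 : K.orthogonalProjectionOnto (B ξ) = e ξ :=
      Submodule.orthogonalProjectionOnto_mem_subspace_eq_self (K := K) (e ξ)
    change C0 (K.orthogonalProjectionOnto (B ξ)) = A ξ
    rw [h1]
    exact LinearMap.extendOfNorm_eq hd hnorm ξ
  have hCperp : ∀ η ∈ Kᗮ, C η = 0 := fun η hη => by
    change C0 (K.orthogonalProjectionOnto η) = 0
    rw [Submodule.orthogonalProjectionOnto_apply_of_mem_orthogonal hη, map_zero]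
  refine ⟨C, ?_, ?_⟩
  · rw [mem_vN_iff]
    intro T hT
    have hK : ∀ η ∈ K, T (C η) = C (T η) := by
      have hcl : IsClosed {η | T (C η) = C (T η)} :=
        isClosed_eq (by fun_prop) (by fun_prop)
      intro η hη
      refine closure_minimal ?_ hcl hη
      rintro _ ⟨ξ, rfl⟩
      change T (C (B ξ)) = C (T (B ξ))
      rw [comm_apply hB hT, hCB, hCB, comm_apply hA hT]
    have hP : ∀ η ∈ Kᗮ, T η ∈ Kᗮ := by
      intro η hη
      have hr : η ∈ (LinearMap.range B.toLinearMap)ᗮ := by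
        rwa [← Submodule.orthogonal_closure]
      have : T η ∈ (LinearMap.range B.toLinearMap)ᗮ := by
        rw [Submodule.mem_orthogonal]
        rintro _ ⟨ξ, rfl⟩
        change inner ℂ (B ξ) (T η) = 0
        rw [← adjoint_inner_left, comm_apply hB (x := B) (T := adjoint T) (star_mem hT)]
        exact (Submodule.mem_orthogonal _ _).1 hr _ ⟨_, rfl⟩
      rwa [← Submodule.orthogonal_closure] at this
    ext ξ
    change T (C ξ) = C (T ξ)
    have hξ : ξ = K.starProjection ξ + Kᗮ.starProjection ξ :=
      (Submodule.starProjection_add_starProjection_orthogonal (K := K) ξ).symm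
    have m1 : K.starProjection ξ ∈ K := Submodule.starProjection_apply_mem _ _
    have m2 : Kᗮ.starProjection ξ ∈ Kᗮ := Submodule.starProjection_apply_mem _ _
    rw [hξ]
    simp only [map_add]
    rw [hK _ m1, hCperp _ m2, hCperp _ (hP _ m2), map_zero]
  · ext ξ; exact (hCB ξ).symm

/-! ### Kadison–Pedersen equivalence through quadratic forms -/

universe v w

/-- Positive elements of `M`. -/
structure MPos (M : VonNeumannAlgebra H) (h : H →L[ℂ] H) : Prop where
  mem : h ∈ M
  nonneg : 0 ≤ h

/-- Kadison–Pedersen equivalence, formulated with quadratic forms. -/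
structure KE (M : VonNeumannAlgebra H) (h k : H →L[ℂ] H) : Prop where
  left : MPos M h
  right : MPos M k
  ex : ∃ (ι : Type u) (x : ι → H →L[ℂ] H), (∀ i, x i ∈ M) ∧
    (∀ ξ : H, HasSum (fun i => ‖x i ξ‖ ^ 2) (qf h ξ)) ∧
    (∀ ξ : H, HasSum (fun i => ‖star (x i) ξ‖ ^ 2) (qf k ξ))

variable {M : VonNeumannAlgebra H}

lemma MPos.add {a b : H →L[ℂ] H} (ha : MPos M a) (hb : MPos M b) : MPos M (a + b) :=
  ⟨add_mem ha.1 hb.1, add_nonneg ha.2 hb.2⟩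

lemma MPos.sub {a b : H →L[ℂ] H} (ha : MPos M a) (hb : MPos M b) (h : b ≤ a) : MPos M (a - b) :=
  ⟨sub_mem ha.1 hb.1, sub_nonneg.2 h⟩

lemma MPos.zero : MPos M (0 : H →L[ℂ] H) := ⟨zero_mem M, le_rfl⟩

lemma MPos.sum {ι : Type*} {a : ι → H →L[ℂ] H} (F : Finset ι) (ha : ∀ i, MPos M (a i)) :
    MPos M (∑ i ∈ F, a i) :=
  ⟨sum_mem fun i _ => (ha i).1, Finset.sum_nonneg fun i _ => (ha i).2⟩

lemma MPos.smul {a : H →L[ℂ] H} (ha : MPos M a) {c : ℝ} (hc : 0 ≤ c) : MPos M ((c : ℂ) • a) := by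
  refine ⟨smul_mem_vN _ ha.1, ?_⟩
  rw [nonneg_iff_isPositive]
  exact ((nonneg_iff_isPositive _).1 ha.2).smul_of_nonneg (by exact_mod_cast hc)

lemma MPos.le_iff {a b : H →L[ℂ] H} (ha : MPos M a) (hb : MPos M b) :
    a ≤ b ↔ ∀ ξ, qf a ξ ≤ qf b ξ := le_iff_qf (.of_nonneg ha.2) (.of_nonneg hb.2)

lemma mpos_star_mul {x : H →L[ℂ] H} (hx : x ∈ M) : MPos M (star x * x) :=
  ⟨mul_mem (star_mem hx) hx, star_mul_self_nonneg x⟩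

lemma MPos.isPositive {a : H →L[ℂ] H} (ha : MPos M a) : a.IsPositive :=
  (nonneg_iff_isPositive _).1 ha.2

lemma KE.toKP {h k : H →L[ℂ] H} (e : KE M h k) : KPEquiv M h k := by
  obtain ⟨ι, x, hx, h1, h2⟩ := e.ex
  refine ⟨ι, x, hx, ?_, ?_⟩
  · exact hasSum_of_qf (a := fun i => star (x i) * x i) (fun i => star_mul_self_nonneg _) e.left.2
      (by simpa only [qf_star_mul] using h1)
  · exact hasSum_of_qf (a := fun i => x i * star (x i)) (fun i => mul_star_self_nonneg _) e.right.2
      (by simpa only [qf_mul_star] using h2)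

lemma KE.ofKP {h k : H →L[ℂ] H} (hh : MPos M h) (hk : MPos M k) (e : KPEquiv M h k) : KE M h k := by
  obtain ⟨ι, x, hx, h1, h2⟩ := e
  refine ⟨hh, hk, ι, x, hx, fun ξ => ?_, fun ξ => ?_⟩
  · simpa only [qf_star_mul] using qf_of_hasSum (a := fun i => star (x i) * x i) (h1 ξ)
  · simpa only [qf_mul_star] using qf_of_hasSum (a := fun i => x i * star (x i)) (h2 ξ)

lemma KE.of_small {h k : H →L[ℂ] H} (hh : MPos M h) (hk : MPos M k) {ι : Type v} [Small.{u} ι]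
    (x : ι → H →L[ℂ] H) (hx : ∀ i, x i ∈ M)
    (h1 : ∀ ξ : H, HasSum (fun i => ‖x i ξ‖ ^ 2) (qf h ξ))
    (h2 : ∀ ξ : H, HasSum (fun i => ‖star (x i) ξ‖ ^ 2) (qf k ξ)) : KE M h k := by
  refine ⟨hh, hk, Shrink.{u} ι, fun i => x ((equivShrink ι).symm i), fun i => hx _,
    fun ξ => ?_, fun ξ => ?_⟩
  · exact ((equivShrink ι).symm.hasSum_iff (f := fun i => ‖x i ξ‖ ^ 2)).2 (h1 ξ)
  · exact ((equivShrink ι).symm.hasSum_iff (f := fun i => ‖star (x i) ξ‖ ^ 2)).2 (h2 ξ)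

lemma KE.symm {h k : H →L[ℂ] H} (e : KE M h k) : KE M k h := by
  obtain ⟨ι, x, hx, h1, h2⟩ := e.ex
  exact ⟨e.right, e.left, ι, fun i => star (x i), fun i => star_mem (hx i), h2, by simpa using h1⟩

lemma KE.refl {h : H →L[ℂ] H} (hh : MPos M h) : KE M h h := by
  refine KE.of_small hh hh (ι := Unit) (fun _ => CFC.sqrt h) (fun _ => sqrt_mem hh.1) ?_ ?_
  · intro ξ
    simp [norm_sqrt_apply hh.2]
  · intro ξ
    simp [norm_sqrt_apply hh.2, (sqrt_props hh.2).1]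

lemma hasSum_sigma_nonneg {I : Type v} {κ : I → Type w} {f : (i : I) → κ i → ℝ} {g : I → ℝ} {s : ℝ}
    (hf : ∀ i j, 0 ≤ f i j) (h1 : ∀ i, HasSum (f i) (g i)) (h2 : HasSum g s) :
    HasSum (fun p : (Σ i, κ i) => f p.1 p.2) s := by
  have hs : Summable (fun p : (Σ i, κ i) => f p.1 p.2) := by
    rw [summable_sigma_of_nonneg (fun p => hf p.1 p.2)]
    refine ⟨fun i => (h1 i).summable, ?_⟩
    have : (fun i => ∑' j, f i j) = g := funext fun i => (h1 i).tsum_eq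
    rw [this]; exact h2.summable
  have h3 := hs.hasSum.sigma h1
  rw [← h3.unique h2]
  exact hs.hasSum

lemma hasSum_prod_nonneg {I : Type v} {κ : Type w} {f : I → κ → ℝ} {g : I → ℝ} {s : ℝ}
    (hf : ∀ i j, 0 ≤ f i j) (h1 : ∀ i, HasSum (f i) (g i)) (h2 : HasSum g s) :
    HasSum (fun p : I × κ => f p.1 p.2) s := by
  have := hasSum_sigma_nonneg hf h1 h2
  exact (Equiv.sigmaEquivProd I κ).hasSum_iff.1 this

lemma hasSum_prod_nonneg_swap {I : Type v} {κ : Type w} {f : I → κ → ℝ} {g : κ → ℝ} {s : ℝ}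
    (hf : ∀ i j, 0 ≤ f i j) (h1 : ∀ j, HasSum (fun i => f i j) (g j)) (h2 : HasSum g s) :
    HasSum (fun p : I × κ => f p.1 p.2) s := by
  have := hasSum_prod_nonneg (f := fun j i => f i j) (fun j i => hf i j) h1 h2
  exact (Equiv.prodComm I κ).hasSum_iff (f := fun p : κ × I => f p.2 p.1).2 this

/-- Core refinement lemma. -/
lemma core_refine {h : H →L[ℂ] H} (hh : MPos M h) {ι : Type v} {κ : Type w}
    {y : ι → H →L[ℂ] H} {x : κ → H →L[ℂ] H} (hy : ∀ i, y i ∈ M) (hx : ∀ j, x j ∈ M)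
    (sy : ∀ ξ, HasSum (fun i => ‖y i ξ‖ ^ 2) (qf h ξ))
    (sx : ∀ ξ, HasSum (fun j => ‖x j ξ‖ ^ 2) (qf h ξ)) :
    ∃ w : ι → κ → H →L[ℂ] H, (∀ i j, w i j ∈ M) ∧
      (∀ i ξ, HasSum (fun j => ‖star (w i j) ξ‖ ^ 2) (‖star (y i) ξ‖ ^ 2)) ∧
      (∀ j ξ, HasSum (fun i => ‖w i j ξ‖ ^ 2) (‖star (x j) ξ‖ ^ 2)) := by
  set B := CFC.sqrt h with hB
  have hBM : B ∈ M := sqrt_mem hh.1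
  have hBs : star B = B := (sqrt_props hh.2).1
  have hq : ∀ ξ, ‖B ξ‖ ^ 2 = qf h ξ := norm_sqrt_apply hh.2
  have hy' : ∀ i, ∃ c ∈ M, y i = c * B := fun i => douglas (hy i) hBM fun ξ => by
    refine le_of_sq_le_sq ?_ (norm_nonneg _)
    rw [hq]; exact le_hasSum (sy ξ) i fun j _ => by positivity
  have hx' : ∀ j, ∃ d ∈ M, x j = d * B := fun i => douglas (hx i) hBM fun ξ => by
    refine le_of_sq_le_sq ?_ (norm_nonneg _)
    rw [hq]; exact le_hasSum (sx ξ) i fun j _ => by positivity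
  choose c hc hyc using hy'
  choose d hd hxd using hx'
  refine ⟨fun i j => y i * star (d j), fun i j => mul_mem (hy i) (star_mem (hd j)), ?_, ?_⟩
  · intro i ξ
    have e1 : star (y i) = B * star (c i) := by rw [hyc i, star_mul, hBs]
    have e2 : ∀ j, star (y i * star (d j)) = x j * star (c i) := fun j => by
      rw [star_mul, star_star, e1, hxd j, mul_assoc]
    simp only [e2, e1]
    change HasSum (fun j => ‖x j (star (c i) ξ)‖ ^ 2) (‖B (star (c i) ξ)‖ ^ 2)
    rw [hq]; exact sx _
  · intro j ξ
    have e1 : star (x j) = B * star (d j) := by rw [hxd j, star_mul, hBs]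
    rw [e1]
    change HasSum (fun i => ‖y i (star (d j) ξ)‖ ^ 2) (‖B (star (d j) ξ)‖ ^ 2)
    rw [hq]; exact sy _

lemma KE.trans {h k l : H →L[ℂ] H} (e : KE M h k) (f : KE M k l) : KE M h l := by
  obtain ⟨κ, x, hx, x1, x2⟩ := e.ex
  obtain ⟨ι, y, hy, y1, y2⟩ := f.ex
  obtain ⟨w, hw, w1, w2⟩ := core_refine e.right hy (fun j => star_mem (hx j)) y1 x2
  refine ⟨e.left, f.right, ι × κ, fun p => w p.1 p.2, fun p => hw _ _, fun ξ => ?_, fun ξ => ?_⟩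
  · refine hasSum_prod_nonneg_swap (f := fun i j => ‖w i j ξ‖ ^ 2) (fun _ _ => by positivity)
      (fun j => w2 j ξ) ?_
    simpa using x1 ξ
  · exact hasSum_prod_nonneg (f := fun i j => ‖star (w i j) ξ‖ ^ 2) (fun _ _ => by positivity)
      (fun i => w1 i ξ) (y2 ξ)

/-- Complete additivity. -/
lemma KE.sum {I : Type v} [Small.{u} I] {h k : I → H →L[ℂ] H} {a b : H →L[ℂ] H}
    (e : ∀ i, KE M (h i) (k i)) (ha : MPos M a) (hb : MPos M b)
    (sa : ∀ ξ, HasSum (fun i => qf (h i) ξ) (qf a ξ))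
    (sb : ∀ ξ, HasSum (fun i => qf (k i) ξ) (qf b ξ)) : KE M a b := by
  choose ι x hx h1 h2 using fun i => (e i).ex
  refine KE.of_small ha hb (ι := Σ i, ι i) (fun p => x p.1 p.2) (fun p => hx _ _) ?_ ?_
  · exact fun ξ => hasSum_sigma_nonneg (f := fun i j => ‖x i j ξ‖ ^ 2) (fun _ _ => by positivity)
      (fun i => h1 i ξ) (sa ξ)
  · exact fun ξ => hasSum_sigma_nonneg (f := fun i j => ‖star (x i j) ξ‖ ^ 2)
      (fun _ _ => by positivity) (fun i => h2 i ξ) (sb ξ)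

lemma hasSum_two (a b : H →L[ℂ] H) (ξ : H) :
    HasSum (fun i : Bool => qf (cond i a b) ξ) (qf (a + b) ξ) := by
  rw [qf_add]
  simpa using hasSum_fintype (fun i : Bool => qf (cond i a b) ξ)

lemma KE.add {a b c d : H →L[ℂ] H} (e : KE M a c) (f : KE M b d) : KE M (a + b) (c + d) :=
  KE.sum (I := Bool) (h := fun i => cond i a b) (k := fun i => cond i c d)
    (fun i => by cases i; exacts [f, e]) (e.left.add f.left) (e.right.add f.right)
    (hasSum_two a b) (hasSum_two c d)

/-- Riesz decomposition. -/
lemma KE.riesz {h k : H →L[ℂ] H} (e : KE M h k) {I : Type v} {a : I → H →L[ℂ] H}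
    (ha : ∀ i, MPos M (a i)) (sa : ∀ ξ, HasSum (fun i => qf (a i) ξ) (qf h ξ)) :
    ∃ b : I → H →L[ℂ] H, (∀ i, KE M (a i) (b i)) ∧
      ∀ ξ, HasSum (fun i => qf (b i) ξ) (qf k ξ) := by
  obtain ⟨κ, x, hx, x1, x2⟩ := e.ex
  obtain ⟨w, hw, w1, w2⟩ := core_refine e.left (y := fun i => CFC.sqrt (a i))
    (fun i => sqrt_mem (ha i).1) hx (fun ξ => by simpa only [norm_sqrt_apply (ha _).2] using sa ξ) x1
  have hex : ∀ i, ∃ b ∈ M, 0 ≤ b ∧ b ≤ k ∧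
      ∀ ξ, HasSum (fun j => qf (star (w i j) * w i j) ξ) (qf b ξ) := fun i => by
    refine exists_strong_sum (fun j => (mpos_star_mul (hw i j)).1)
      (fun j => (mpos_star_mul (hw i j)).2) fun F => ?_
    rw [(MPos.sum F fun j => mpos_star_mul (hw i j)).le_iff e.right]
    intro ξ
    rw [qf_sum]
    calc _ ≤ ∑ j ∈ F, ‖star (x j) ξ‖ ^ 2 := by
          refine Finset.sum_le_sum fun j _ => ?_
          rw [qf_star_mul]
          exact le_hasSum (w2 j ξ) i fun _ _ => by positivity
      _ ≤ _ := sum_le_hasSum F (fun _ _ => by positivity) (x2 ξ)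
  choose b hbM hb0 hbk hbs using hex
  simp only [qf_star_mul] at hbs
  refine ⟨b, fun i => ?_, fun ξ => ?_⟩
  · refine KE.symm ⟨⟨hbM i, hb0 i⟩, ha i, κ, w i, hw i, hbs i, fun ξ => ?_⟩
    have := w1 i ξ
    rwa [(sqrt_props (ha i).2).1, norm_sqrt_apply (ha i).2] at this
  · have := hasSum_prod_nonneg_swap (f := fun i j => ‖w i j ξ‖ ^ 2) (fun _ _ => by positivity)
      (fun j => w2 j ξ) (x2 ξ)
    exact this.prod_fiberwise fun i => hbs i ξ

lemma KE.riesz_two {a b k : H →L[ℂ] H} (ha : MPos M a) (hb : MPos M b) (e : KE M (a + b) k) :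
    ∃ c d, KE M a c ∧ KE M b d ∧ k = c + d := by
  obtain ⟨f, h1, h2⟩ := e.riesz (I := Bool) (a := fun i => cond i a b)
    (fun i => by cases i; exacts [hb, ha]) (hasSum_two a b)
  refine ⟨f true, f false, h1 true, h1 false, ?_⟩
  refine eq_of_qf e.right.2 ((h1 true).right.add (h1 false).right).2 fun ξ => ?_
  rw [qf_add]
  have := hasSum_fintype (fun i : Bool => qf (f i) ξ)
  rw [Fintype.sum_bool] at this
  exact (h2 ξ).unique this

lemma KE.smul {h k : H →L[ℂ] H} (e : KE M h k) {c : ℝ} (hc : 0 ≤ c) :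
    KE M ((c : ℂ) • h) ((c : ℂ) • k) := by
  obtain ⟨ι, x, hx, h1, h2⟩ := e.ex
  have key : ∀ η : H, ‖((√c : ℝ) : ℂ) • η‖ ^ 2 = c * ‖η‖ ^ 2 := fun η => by
    rw [norm_smul, mul_pow, Complex.norm_real, Real.norm_eq_abs, sq_abs, Real.sq_sqrt hc]
  refine ⟨e.left.smul hc, e.right.smul hc, ι, fun i => ((√c : ℝ) : ℂ) • x i,
    fun i => smul_mem_vN _ (hx i), fun ξ => ?_, fun ξ => ?_⟩
  · rw [qf_smul]
    simpa only [_root_.smul_apply, key] using (h1 ξ).mul_left c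
  · rw [qf_smul]
    have : ∀ i, star (((√c : ℝ) : ℂ) • x i) = ((√c : ℝ) : ℂ) • star (x i) := fun i => by
      rw [star_smul]; congr 1; exact Complex.conj_ofReal _
    simpa only [this, _root_.smul_apply, key] using (h2 ξ).mul_left c

lemma central_conj {z h : H →L[ℂ] H} (hz : IsCentralProj M z) (hh : h ∈ M) :
    z * h = star z * h * z := by
  rw [hz.1.2.1.star_eq, mul_assoc, ← hz.2 h hh, ← mul_assoc, hz.1.2.2]

lemma qf_central {z h : H →L[ℂ] H} (hz : IsCentralProj M z) (hh : h ∈ M) (ξ : H) :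
    qf (z * h) ξ = qf h (z ξ) := by
  rw [central_conj hz hh, mul_assoc]
  change (inner ℂ ((adjoint z) (h (z ξ))) ξ).re = _
  rw [adjoint_inner_left]; rfl

lemma MPos.central {z h : H →L[ℂ] H} (hh : MPos M h) (hz : IsCentralProj M z) : MPos M (z * h) := by
  refine ⟨mul_mem hz.1.1 hh.1, ?_⟩
  rw [central_conj hz hh.1]
  exact star_left_conjugate_nonneg hh.2 z

lemma KE.central {z h k : H →L[ℂ] H} (hz : IsCentralProj M z) (e : KE M h k) :
    KE M (z * h) (z * k) := by
  obtain ⟨ι, x, hx, h1, h2⟩ := e.ex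
  refine ⟨e.left.central hz, e.right.central hz, ι, fun i => x i * z,
    fun i => mul_mem (hx i) hz.1.1, fun ξ => ?_, fun ξ => ?_⟩
  · rw [qf_central hz e.left.1]; exact h1 (z ξ)
  · rw [qf_central hz e.right.1]
    have : ∀ i, star (x i * z) = star (x i) * z := fun i => by
      rw [star_mul, hz.1.2.1.star_eq, hz.2 _ (star_mem (hx i))]
    simp only [this]
    exact h2 (z ξ)

lemma KE.eq_zero {a : H →L[ℂ] H} (e : KE M a 0) : a = 0 := by
  obtain ⟨ι, x, hx, h1, h2⟩ := e.ex
  have hx0 : ∀ i, x i = 0 := fun i => by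
    rw [← star_eq_zero]
    ext ξ
    have := h2 ξ
    rw [qf_zero, hasSum_zero_iff_of_nonneg (fun _ => by positivity)] at this
    simpa using congrFun this i
  refine eq_of_qf e.left.2 le_rfl fun ξ => ?_
  have := h1 ξ
  simp only [hx0] at this
  rw [qf_zero]
  exact this.unique (by simp)

/-! ### Copies, absorption, Schröder–Bernstein -/

/-- Subequivalence. -/
def KS (M : VonNeumannAlgebra H) (a b : H →L[ℂ] H) : Prop := ∃ l, KE M a l ∧ l ≤ b

lemma sum_le_of_range {r : ℕ → H →L[ℂ] H} {h : H →L[ℂ] H} (hr : ∀ n, 0 ≤ r n)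
    (hle : ∀ n, ∑ i ∈ Finset.range n, r i ≤ h) (F : Finset ℕ) : ∑ i ∈ F, r i ≤ h := by
  obtain ⟨n, hn⟩ := F.exists_nat_subset_range
  exact (Finset.sum_le_sum_of_subset_of_nonneg hn fun i _ _ => hr i).trans (hle n)

lemma exists_copies {h k r : H →L[ℂ] H} (hr : MPos M r) (hk : h = k + r) (e : KE M h k) :
    ∃ s : ℕ → H →L[ℂ] H, (∀ n, KE M r (s n)) ∧ ∀ F : Finset ℕ, ∑ i ∈ F, s i ≤ h := by
  have step : ∀ g : {g // KE M h g}, ∃ g' : {g // KE M h g}, ∃ t, KE M r t ∧ g.1 = g'.1 + t := by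
    rintro ⟨g, hg⟩
    obtain ⟨c, d, h1, h2, h3⟩ := KE.riesz_two e.right hr (hk ▸ hg)
    exact ⟨⟨c, e.trans h1⟩, d, h2, h3⟩
  choose nx t ht hnx using step
  let g : ℕ → {g // KE M h g} := fun n => nx^[n] ⟨h, KE.refl e.left⟩
  have hg : ∀ n, (g n).1 = (g (n + 1)).1 + t (g n) := fun n => by
    have : g (n + 1) = nx (g n) := Function.iterate_succ_apply' _ _ _
    rw [this]; exact hnx _
  refine ⟨fun n => t (g n), fun n => ht _, sum_le_of_range (fun n => (ht _).right.2) fun n => ?_⟩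
  have : ∀ n, h = (g n).1 + ∑ i ∈ Finset.range n, t (g i) := fun n => by
    induction n with
    | zero => simp [g]
    | succ n ih =>
      rw [Finset.sum_range_succ, add_comm (∑ i ∈ Finset.range n, t (g i)), ← add_assoc, ← hg]
      exact ih
  calc _ ≤ (g n).1 + ∑ i ∈ Finset.range n, t (g i) := le_add_of_nonneg_left (g n).2.right.2
    _ = h := (this n).symm

lemma absorb {s b : H →L[ℂ] H} {f : ℕ → H →L[ℂ] H} (hf : ∀ n, KE M s (f n)) (hb : MPos M b)
    (sf : ∀ ξ, HasSum (fun n => qf (f n) ξ) (qf b ξ)) : KE M (s + b) b := by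
  refine KE.sum (I := ℕ) (h := fun n => Nat.casesOn n s f) (k := f) (fun n => ?_)
    ((hf 0).left.add hb) hb (fun ξ => ?_) sf
  · cases n with
    | zero => exact hf 0
    | succ n => exact (hf n).symm.trans (hf (n + 1))
  · rw [← hasSum_nat_add_iff' 1]
    simpa [qf_add] using sf ξ

lemma absorb_main {h l₁ l₂ s : H →L[ℂ] H} (hl : MPos M l₂) (hs : MPos M s)
    (hd : h = l₁ + (l₂ + s)) (e : KE M h l₁) : KE M h (l₁ + l₂) := by
  obtain ⟨r, hr, hle⟩ := exists_copies (hl.add hs) hd e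
  choose a b ha hb hab using fun n => KE.riesz_two hl hs (hr n)
  have hble : ∀ F : Finset ℕ, ∑ i ∈ F, b i ≤ h := fun F => by
    refine (Finset.sum_le_sum fun i _ => ?_).trans (hle F)
    rw [hab i]; exact le_add_of_nonneg_left (ha i).right.2
  obtain ⟨B, hBM, hB0, hBh, hBs⟩ := exists_strong_sum (fun n => (hb n).right.1)
    (fun n => (hb n).right.2) hble
  have hB : MPos M B := ⟨hBM, hB0⟩
  have e' : KE M (B + (h - B)) l₁ := by rwa [add_sub_cancel]
  obtain ⟨B', c, h1, h2, h3⟩ := KE.riesz_two hB (e.left.sub hB hBh) e'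
  obtain ⟨b', hb', hb's⟩ := h1.riesz (fun n => (hb n).right) hBs
  have h4 : KE M (s + B') B' := absorb (fun n => (hb n).trans (hb' n)) h1.right hb's
  have h5 := h4.add (KE.refl (h2.right.add hl))
  have e1 : s + B' + (c + l₂) = h := by rw [hd, h3]; abel
  have e2 : B' + (c + l₂) = l₁ + l₂ := by rw [h3]; abel
  rwa [e1, e2] at h5

/-- Schröder–Bernstein. -/
lemma schroeder_bernstein {h q : H →L[ℂ] H} (h1 : KS M h q) (h2 : KS M q h) : KE M h q := by
  obtain ⟨k, e, hk⟩ := h1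
  obtain ⟨l, f, hl⟩ := h2
  have hq := f.left
  have f' : KE M (k + (q - k)) l := by rwa [add_sub_cancel]
  obtain ⟨l₁, l₂, a1, a2, rfl⟩ := KE.riesz_two e.right (hq.sub e.right hk) f'
  have := absorb_main (h := h) a2.right (e.left.sub f.right hl)
    (by rw [← add_assoc, add_sub_cancel]) (e.trans a1)
  exact this.trans f.symm

lemma KS.add {a b c d : H →L[ℂ] H} (h1 : KS M a b) (h2 : KS M c d) : KS M (a + c) (b + d) := by
  obtain ⟨k, e, hk⟩ := h1
  obtain ⟨l, f, hl⟩ := h2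
  exact ⟨k + l, e.add f, add_le_add hk hl⟩

lemma KS.trans {a b c : H →L[ℂ] H} (hb : MPos M b) (h1 : KS M a b) (h2 : KS M b c) : KS M a c := by
  obtain ⟨k, e, hk⟩ := h1
  obtain ⟨l, f, hl⟩ := h2
  have f' : KE M (k + (b - k)) l := by rwa [add_sub_cancel]
  obtain ⟨l₁, l₂, a1, a2, rfl⟩ := KE.riesz_two e.right (hb.sub e.right hk) f'
  exact ⟨l₁, e.trans a1, (le_add_of_nonneg_right a2.right.2).trans hl⟩

lemma KS.of_le {a b : H →L[ℂ] H} (ha : MPos M a) (h : a ≤ b) : KS M a b := ⟨a, KE.refl ha, h⟩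

lemma KE.ks {a b : H →L[ℂ] H} (e : KE M a b) : KS M a b := ⟨b, e, le_rfl⟩

lemma idem_copies {r R : H →L[ℂ] H} {f : ℕ → H →L[ℂ] H} (hf : ∀ n, KE M r (f n)) (hR : MPos M R)
    (sf : ∀ ξ, HasSum (fun n => qf (f n) ξ) (qf R ξ)) : KE M (R + R) R := by
  let e : ℕ ⊕ ℕ ≃ ℕ := Equiv.natSumNatEquivNat
  refine KE.sum (I := ℕ ⊕ ℕ) (h := Sum.elim f f) (k := fun i => f (e i)) (fun n => ?_)
    (hR.add hR) hR (fun ξ => ?_) (fun ξ => ?_)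
  · rcases n with n | n <;> exact (hf _).symm.trans (hf _)
  · rw [qf_add]
    exact HasSum.sum (f := fun i => qf (Sum.elim f f i) ξ) (sf ξ) (sf ξ)
  · exact (e.hasSum_iff (f := fun n => qf (f n) ξ)).2 (sf ξ)

/-! ### Maximal families and comparison -/

lemma exists_max_set {X : Type*} [DecidableEq X] (P : Finset X → Prop) (h0 : P ∅) :
    ∃ S : Set X, (∀ F : Finset X, ↑F ⊆ S → P F) ∧
      ∀ p ∉ S, ∃ F : Finset X, ↑F ⊆ S ∧ ¬ P (insert p F) := by
  let 𝓕 : Set (Set X) := {S | ∀ F : Finset X, ↑F ⊆ S → P F}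
  have hfc : Order.IsOfFiniteCharacter 𝓕 := by
    intro S
    refine ⟨fun h T hT _ F hF => h F (hF.trans hT), fun h F hF => ?_⟩
    exact h F hF F.finite_toSet F subset_rfl
  have he : (∅ : Set X) ∈ 𝓕 := fun F hF => by
    have : F = ∅ := by simpa using hF
    rwa [this]
  obtain ⟨S, -, hS, hmax⟩ := hfc.exists_maximal he
  refine ⟨S, hS, fun p hp => ?_⟩
  have hn : insert p S ∉ 𝓕 := fun hmem => hp (hmax hmem (Set.subset_insert p S) (Set.mem_insert p S))
  simp only [𝓕, Set.mem_setOf_eq, not_forall] at hn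
  obtain ⟨G, hG, hPG⟩ := hn
  have hpG : p ∈ G := by
    by_contra hpG
    refine hPG (hS G fun x hx => ?_)
    rcases hG hx with rfl | h
    · exact absurd hx hpG
    · exact h
  refine ⟨G.erase p, fun x hx => ?_, by rwa [Finset.insert_erase hpG]⟩
  rw [Finset.coe_erase] at hx
  exact (hG hx.1).resolve_left hx.2

lemma max_family (Q : (H →L[ℂ] H) → Prop) (φ ψ : (H →L[ℂ] H) → (H →L[ℂ] H))
    (hφ : ∀ x, Q x → MPos M (φ x)) (hψ : ∀ x, Q x → MPos M (ψ x)) {h k : H →L[ℂ] H}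
    (hh : MPos M h) (hk : MPos M k) :
    ∃ S : Set ((H →L[ℂ] H) × ℕ), (∀ p ∈ S, Q p.1) ∧ ∃ h' k', MPos M h' ∧ MPos M k' ∧ h' ≤ h ∧ k' ≤ k ∧
      (∀ ξ, HasSum (fun p : S => qf (φ p.1.1) ξ) (qf h' ξ)) ∧
      (∀ ξ, HasSum (fun p : S => qf (ψ p.1.1) ξ) (qf k' ξ)) ∧
      ∀ x, Q x → φ x ≤ h - h' → ψ x ≤ k - k' → φ x = 0 := by
  classical
  obtain ⟨S, hS, hmax⟩ := exists_max_set (X := (H →L[ℂ] H) × ℕ)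
    (fun F => (∀ p ∈ F, Q p.1) ∧ ∑ p ∈ F, φ p.1 ≤ h ∧ ∑ p ∈ F, ψ p.1 ≤ k)
    ⟨by simp, by simpa using hh.2, by simpa using hk.2⟩
  have hQ : ∀ p ∈ S, Q p.1 := fun p hp =>
    (hS {p} (by simpa using hp)).1 p (Finset.mem_singleton_self p)
  have hsub : ∀ F : Finset S, ↑(F.map (Function.Embedding.subtype (· ∈ S))) ⊆ S := fun F => by
    intro x hx
    simp only [Finset.coe_map, Function.Embedding.subtype_apply, Set.mem_image] at hx
    obtain ⟨y, _, rfl⟩ := hx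
    exact y.2
  obtain ⟨h', hM', h0', hle', hs'⟩ := exists_strong_sum (M := M) (a := fun p : S => φ p.1.1) (h := h)
    (fun p => (hφ _ (hQ _ p.2)).1) (fun p => (hφ _ (hQ _ p.2)).2) (fun F => by
      simpa using (hS _ (hsub F)).2.1)
  obtain ⟨k', kM', k0', kle', ks'⟩ := exists_strong_sum (M := M) (a := fun p : S => ψ p.1.1) (h := k)
    (fun p => (hψ _ (hQ _ p.2)).1) (fun p => (hψ _ (hQ _ p.2)).2) (fun F => by
      simpa using (hS _ (hsub F)).2.2)
  refine ⟨S, hQ, h', k', ⟨hM', h0'⟩, ⟨kM', k0'⟩, hle', kle', hs', ks', fun x hx h1 h2 => ?_⟩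
  by_contra hne
  have hn : ∃ n : ℕ, (x, n) ∉ S := by
    by_contra hall
    push Not at hall
    refine hne (eq_of_qf (hφ x hx).2 le_rfl fun ξ => ?_)
    have := (hs' ξ).summable.comp_injective (i := fun n : ℕ => (⟨(x, n), hall n⟩ : S))
      (fun m n hmn => by simpa using hmn)
    rw [qf_zero]
    exact (summable_const_iff _).1 (this : Summable fun _ : ℕ => qf (φ x) ξ)
  obtain ⟨n, hn⟩ := hn
  obtain ⟨F, hF, hnP⟩ := hmax _ hn
  have hnF : (x, n) ∉ F := fun hm => hn (hF hm)
  have hfin : ∀ (θ : (H →L[ℂ] H) → (H →L[ℂ] H)) (g : H →L[ℂ] H), (∀ y, Q y → MPos M (θ y)) →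
      MPos M g → (∀ ξ, HasSum (fun p : S => qf (θ p.1.1) ξ) (qf g ξ)) → ∑ p ∈ F, θ p.1 ≤ g := by
    intro θ g hθ hg hsum
    have hpos : MPos M (∑ p ∈ F, θ p.1) :=
      ⟨sum_mem fun p hp => (hθ _ (hQ p (hF hp))).1,
        Finset.sum_nonneg fun p hp => (hθ _ (hQ p (hF hp))).2⟩
    rw [hpos.le_iff hg]
    intro ξ
    rw [qf_sum]
    have := sum_le_hasSum (F.subtype (· ∈ S)) (fun p _ => qf_nonneg (hθ _ (hQ p.1 p.2)).2 ξ) (hsum ξ)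
    rwa [Finset.sum_subtype_of_mem (fun p : (H →L[ℂ] H) × ℕ => qf (θ p.1) ξ)
      (fun p hp => hF hp)] at this
  refine hnP ⟨fun p hp => ?_, ?_, ?_⟩
  · rcases Finset.mem_insert.1 hp with rfl | hp
    · exact hx
    · exact hQ p (hF hp)
  · rw [Finset.sum_insert hnF]
    calc _ ≤ (h - h') + h' := add_le_add h1 (hfin φ h' hφ ⟨hM', h0'⟩ hs')
      _ = h := sub_add_cancel _ _
  · rw [Finset.sum_insert hnF]
    calc _ ≤ (k - k') + k' := add_le_add h2 (hfin ψ k' hψ ⟨kM', k0'⟩ ks')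
      _ = k := sub_add_cancel _ _

lemma exists_central {a b : H →L[ℂ] H} (ha : a ∈ M)
    (hab : ∀ y ∈ M, b * y * a = 0) : ∃ z, IsCentralProj M z ∧ z * a = a ∧ b * z = 0 := by
  let V : Submodule ℂ H := Submodule.span ℂ {η | ∃ y ∈ M, ∃ ξ, y (a ξ) = η}
  let K := V.topologicalClosure
  have hKc : IsClosed (K : Set H) := Submodule.isClosed_topologicalClosure _
  have : CompleteSpace K := hKc.completeSpace_coe
  have hproj : IsStarProjection K.starProjection := isStarProjection_starProjection
  have hinv : ∀ T : H →L[ℂ] H, (∀ y ∈ M, ∀ ξ, T (y (a ξ)) ∈ V) → ∀ η ∈ K, T η ∈ K := by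
    intro T hT η hη
    have hV : V ≤ K.comap T.toLinearMap := by
      refine Submodule.span_le.2 ?_
      rintro _ ⟨y, hy, ξ, rfl⟩
      exact Submodule.le_topologicalClosure _ (hT y hy ξ)
    have hcl : IsClosed ((K.comap T.toLinearMap : Submodule ℂ H) : Set H) :=
      hKc.preimage T.continuous
    exact Submodule.topologicalClosure_minimal V hV hcl hη
  have hM' : ∀ T ∈ M.commutant, ∀ η ∈ K, T η ∈ K := fun T hT => hinv T fun y hy ξ => by
    rw [comm_apply hy hT, comm_apply ha hT]
    exact Submodule.subset_span ⟨y, hy, _, rfl⟩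
  have hM : ∀ T ∈ M, ∀ η ∈ K, T η ∈ K := fun T hT => hinv T fun y hy ξ =>
    Submodule.subset_span ⟨T * y, mul_mem hT hy, ξ, rfl⟩
  have hr : K.starProjection.range = K := Submodule.range_starProjection K
  have z1 : K.starProjection ∈ M := by
    rw [VonNeumannAlgebra.IsStarProjection.mem_iff hproj]
    intro y hy
    rw [hr]
    exact hM' y hy
  have z2 : K.starProjection ∈ M.commutant := by
    rw [VonNeumannAlgebra.IsStarProjection.mem_iff hproj]
    intro y hy
    rw [hr]
    rw [VonNeumannAlgebra.commutant_commutant] at hy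
    exact hM y hy
  refine ⟨K.starProjection, ⟨⟨z1, hproj.isSelfAdjoint, hproj.isIdempotentElem⟩, fun x hx =>
    comm_of_mem hx z2⟩, ?_, ?_⟩
  · ext ξ
    change K.starProjection (a ξ) = a ξ
    refine Submodule.starProjection_eq_self_iff.2 (Submodule.le_topologicalClosure _ ?_)
    exact Submodule.subset_span ⟨1, one_mem M, ξ, rfl⟩
  · have hb : K ≤ LinearMap.ker b.toLinearMap := by
      refine Submodule.topologicalClosure_minimal V (Submodule.span_le.2 ?_) b.isClosed_ker
      rintro _ ⟨y, hy, ξ, rfl⟩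
      exact congrArg (fun A : H →L[ℂ] H => A ξ) (hab y hy)
    ext ξ
    exact hb (Submodule.starProjection_apply_mem K ξ)

lemma IsCentralProj.compl {z : H →L[ℂ] H} (hz : IsCentralProj M z) : IsCentralProj M (1 - z) := by
  refine ⟨⟨sub_mem (one_mem M) hz.1.1, (IsSelfAdjoint.one _).sub hz.1.2.1, ?_⟩, fun x hx => ?_⟩
  · rw [mul_sub, sub_mul, sub_mul, hz.1.2.2]; simp
  · rw [sub_mul, mul_sub, hz.2 x hx]; simp

lemma central_le {z h : H →L[ℂ] H} (hz : IsCentralProj M z) (hh : MPos M h) : z * h ≤ h := by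
  have := (hh.central hz.compl).2
  rw [sub_mul, one_mul] at this
  exact sub_nonneg.1 this

lemma central_mono {z a b : H →L[ℂ] H} (hz : IsCentralProj M z) (ha : MPos M a) (hb : MPos M b)
    (h : a ≤ b) : z * a ≤ z * b := by
  have := ((hb.sub ha h).central hz).2
  rw [mul_sub] at this
  exact sub_nonneg.1 this

/-- Comparison theorem. -/
lemma comparison {a b : H →L[ℂ] H} (ha : MPos M a) (hb : MPos M b) :
    ∃ z, IsCentralProj M z ∧ KS M (z * b) (z * a) ∧ KS M ((1 - z) * a) ((1 - z) * b) := by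
  obtain ⟨S, hS, a', b', ha', hb', hla, hlb, sa, sb, hmax⟩ := max_family (M := M) (fun x => x ∈ M)
    (fun x => star x * x) (fun x => x * star x) (fun x hx => mpos_star_mul hx)
    (fun x hx => by simpa using mpos_star_mul (star_mem hx)) ha hb
  have e : KE M a' b' := by
    refine KE.of_small ha' hb' (fun p : S => p.1.1) (fun p => hS _ p.2) ?_ ?_
    · simpa only [qf_star_mul] using sa
    · simpa only [qf_mul_star] using sb
  have pa := ha.sub ha' hla
  have pb := hb.sub hb' hlb
  obtain ⟨s1, s2⟩ := sqrt_props pa.2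
  obtain ⟨t1, t2⟩ := sqrt_props pb.2
  have sM := sqrt_mem pa.1
  have tM := sqrt_mem pb.1
  set s := CFC.sqrt (a - a') with hs
  set t := CFC.sqrt (b - b') with ht
  have hzero : ∀ y ∈ M, t * y * s = 0 := by
    intro y hy
    set x := t * y * s with hxdef
    have hxM : x ∈ M := mul_mem (mul_mem tM hy) sM
    have hx1 : ∀ ξ, ‖x ξ‖ ≤ (‖t‖ * ‖y‖) * ‖s ξ‖ := fun ξ => by
      have : x ξ = (t * y) (s ξ) := rfl
      rw [this]
      exact ((t * y).le_opNorm _).trans (by gcongr; exact norm_mul_le _ _)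
    have hx2 : ∀ ξ, ‖star x ξ‖ ≤ (‖s‖ * ‖y‖) * ‖t ξ‖ := fun ξ => by
      have : star x = s * star y * t := by rw [hxdef, star_mul, star_mul, s1, t1, mul_assoc]
      rw [this]
      change ‖(s * star y) (t ξ)‖ ≤ _
      refine ((s * star y).le_opNorm _).trans ?_
      gcongr
      exact (norm_mul_le _ _).trans (by rw [norm_star])
    set N : ℝ := ‖t‖ * ‖y‖ + ‖s‖ * ‖y‖ + 1 with hN
    have hN0 : 0 < N := by positivity
    have c1 : ‖t‖ * ‖y‖ ≤ N := by rw [hN]; have : 0 ≤ ‖s‖ * ‖y‖ := by positivity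
                                  linarith
    have c2 : ‖s‖ * ‖y‖ ≤ N := by rw [hN]; have : 0 ≤ ‖t‖ * ‖y‖ := by positivity
                                  linarith
    let c : ℂ := ((N⁻¹ : ℝ) : ℂ)
    have hc : ∀ η : H, ‖c • η‖ = N⁻¹ * ‖η‖ := fun η => by
      rw [norm_smul, Complex.norm_real, Real.norm_eq_abs, abs_of_pos (by positivity)]
    have hcx : c • x ∈ M := smul_mem_vN _ hxM
    have hstar : star (c • x) = c • star x := by
      rw [star_smul]; congr 1; exact Complex.conj_ofReal _
    have key := hmax (c • x) hcx ?_ ?_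
    · have hcx0 : c • x = 0 := (CStarRing.star_mul_self_eq_zero_iff _).1 key
      have hc0 : c ≠ 0 := by
        simp only [c, ne_eq, Complex.ofReal_eq_zero]; positivity
      exact (smul_eq_zero.1 hcx0).resolve_left hc0
    · rw [(mpos_star_mul hcx).le_iff pa]
      intro ξ
      rw [qf_star_mul, ← norm_sqrt_apply pa.2, ← hs, _root_.smul_apply, hc]
      gcongr
      rw [inv_mul_le_iff₀ hN0]
      exact (hx1 ξ).trans (by gcongr)
    · have hp : MPos M ((c • x) * star (c • x)) := by simpa using mpos_star_mul (star_mem hcx)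
      rw [hp.le_iff pb]
      intro ξ
      rw [qf_mul_star, ← norm_sqrt_apply pb.2, ← ht, hstar, _root_.smul_apply, hc]
      gcongr
      rw [inv_mul_le_iff₀ hN0]
      exact (hx2 ξ).trans (by gcongr)
  obtain ⟨z, hz, hza, hbz⟩ := exists_central (M := M) (a := a - a') (b := b - b') pa.1 (fun y hy => by
    have := hzero y hy
    calc (b - b') * y * (a - a') = t * (t * y * s) * s := by rw [← s2, ← t2]; simp only [mul_assoc]
      _ = 0 := by rw [this]; simp)
  have hzb : z * (b - b') = 0 := by rw [hz.2 _ pb.1]; exact hbz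
  have e1 : z * b = z * b' := by rw [mul_sub] at hzb; exact sub_eq_zero.1 hzb
  have e2 : (1 - z) * a = (1 - z) * a' := by
    have : (1 - z) * (a - a') = 0 := by rw [sub_mul, one_mul, hza, sub_self]
    rw [mul_sub] at this; exact sub_eq_zero.1 this
  refine ⟨z, hz, ?_, ?_⟩
  · rw [e1]; exact ⟨z * a', e.symm.central hz, central_mono hz ha' ha hla⟩
  · rw [e2]; exact ⟨(1 - z) * b', e.central hz.compl, central_mono hz.compl hb' hb hlb⟩

/-! ### Properly infinite elements absorb themselves -/


lemma double {h : H →L[ℂ] H} (hh : MPos M h)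
    (hinf : ∀ z, IsCentralProj M z → KPFinite M (z * h) → z * h = 0) : KE M (h + h) h := by
  obtain ⟨S, hS, K, K', hK, hK', hKh, -, sK, sK', hmax⟩ :=
    max_family (M := M) (fun k => KE M (k + k) k)
      id id (fun x hx => hx.right) (fun x hx => hx.right) hh hh
  have hKK : K' = K := eq_of_qf hK'.2 hK.2 fun ξ => (sK' ξ).unique (sK ξ)
  subst hKK
  have idK : KE M (K' + K') K' := by
    refine KE.sum (I := S) (h := fun p => p.1.1 + p.1.1) (k := fun p => p.1.1)
      (fun p => hS _ p.2) (hK.add hK) hK (fun ξ => ?_) sK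
    simp only [qf_add]
    exact (sK ξ).add (sK ξ)
  have hs : MPos M (h - K') := hh.sub hK hKh
  set s := h - K' with hsdef
  have hmax' : ∀ l, KE M (l + l) l → l ≤ s → l = 0 := fun l hl hls => hmax l hl hls hls
  obtain ⟨z, hz, h1, l, h2, h3⟩ := comparison (M := M) hK hs
  have hl0 : l = 0 := by
    refine hmax' l ?_ (h3.trans (central_le hz.compl hs))
    have := idK.central hz.compl
    rw [mul_add] at this
    exact ((h2.add h2).symm.trans this).trans h2
  have hzK : (1 - z) * K' = 0 := by
    rw [hl0] at h2; exact h2.eq_zero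
  have hzh : (1 - z) * h = (1 - z) * s := by rw [hsdef, mul_sub, hzK, sub_zero]
  have hzh0 : (1 - z) * h = 0 := by
    refine hinf _ hz.compl fun k hkM hkp hle e => ?_
    have hk : MPos M k := ⟨hkM, (nonneg_iff_isPositive _).2 hkp⟩
    have hle' : k ≤ (1 - z) * h := hle
    have hzp := hh.central hz.compl
    have e' : KE M ((1 - z) * h) k := KE.ofKP hzp hk e
    have hr := hzp.sub hk hle'
    obtain ⟨f, hf, hfl⟩ := exists_copies hr (by abel) e'
    obtain ⟨R, hRM, hR0, hRle, hRs⟩ := exists_strong_sum (M := M) (a := f)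
      (fun n => (hf n).right.1) (fun n => (hf n).right.2) hfl
    have hRz : R = 0 := by
      refine hmax' R (idem_copies hf ⟨hRM, hR0⟩ hRs) (hRle.trans ?_)
      rw [hzh]; exact central_le hz.compl hs
    have hf0 : f 0 = 0 := by
      refine eq_of_qf (hf 0).right.2 le_rfl fun ξ => ?_
      have := hRs ξ
      rw [hRz, qf_zero, hasSum_zero_iff_of_nonneg (fun n => qf_nonneg (hf n).right.2 ξ)] at this
      rw [qf_zero]
      exact congrFun this 0
    have h0 := hf 0
    rw [hf0] at h0
    exact (sub_eq_zero.1 h0.eq_zero).symm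
  have ez : ∀ a : H →L[ℂ] H, (1 - z) * a = 0 → z * a = a := fun a ha => by
    rw [sub_mul, one_mul] at ha; exact (sub_eq_zero.1 ha).symm
  rw [ez s (hzh ▸ hzh0), ez K' hzK] at h1
  have hhs : h = s + K' := by rw [hsdef]; abel
  have k1 : KS M h (K' + K') := by
    rw [hhs]; exact h1.add (KS.of_le hK le_rfl)
  have k2 : KS M h K' := k1.trans (hK.add hK) idK.ks
  have k3 : KS M (h + h) K' := (k2.add k2).trans (hK.add hK) idK.ks
  refine schroeder_bernstein (k3.trans hK (KS.of_le hK hKh)) (KS.of_le hh ?_)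
  exact le_add_of_nonneg_left hh.2

lemma to_proj {h : H →L[ℂ] H} (hh : MPos M h) (idem : KE M (h + h) h) (h1 : h ≤ 1) :
    ∃ p, IsProjIn M p ∧ KE M h p := by
  set u : H →L[ℂ] H := 1 - h with hu
  have hu0 : 0 ≤ u := sub_nonneg.2 h1
  have huM : u ∈ M := sub_mem (one_mem M) hh.1
  have cuh : Commute h u := by
    rw [hu]; exact (Commute.one_right h).sub_right (Commute.refl h)
  have hup : ∀ n, 0 ≤ u ^ n := fun n => by
    induction n with
    | zero => simp
    | succ n ih => rw [pow_succ]; exact Commute.mul_nonneg ih hu0 ((Commute.refl u).pow_left n)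
  let d : ℕ → H →L[ℂ] H := fun n => h * u ^ n
  have hd : ∀ n, MPos M (d n) := fun n =>
    ⟨mul_mem hh.1 (pow_mem huM n), Commute.mul_nonneg hh.2 (hup n) (cuh.pow_right n)⟩
  have hsum : ∀ N, ∑ i ∈ Finset.range N, d i = 1 - u ^ N := fun N => by
    induction N with
    | zero => simp
    | succ n ih =>
      rw [Finset.sum_range_succ, ih, pow_succ', hu]
      simp only [d]; rw [← hu]
      have : h = 1 - u := by rw [hu]; abel
      rw [this, sub_mul, one_mul]; abel
  have hpow1 : ∀ n, 0 ≤ 1 - u ^ n := fun n => by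
    rw [← hsum]; exact Finset.sum_nonneg fun i _ => (hd i).2
  have hdh : ∀ n, MPos M (h - d n) := fun n => by
    refine ⟨sub_mem hh.1 (hd n).1, ?_⟩
    have : h - d n = h * (1 - u ^ n) := by rw [mul_sub, mul_one]
    rw [this]
    exact Commute.mul_nonneg hh.2 (hpow1 n) ((Commute.one_right h).sub_right (cuh.pow_right n))
  obtain ⟨p, hpM, hp0, hp1, hps⟩ := exists_strong_sum (M := M) (a := d) (h := 1)
    (fun n => (hd n).1) (fun n => (hd n).2) (sum_le_of_range (fun n => (hd n).2) fun n => by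
      rw [hsum]; exact sub_le_self _ (hup n))
  have hpP : MPos M p := ⟨hpM, hp0⟩
  have lim : ∀ ξ, Tendsto (fun N => (u ^ N) ξ) atTop (𝓝 ((1 - p) ξ)) := fun ξ => by
    have a1 := (hasSum_of_qf (fun n => (hd n).2) hp0 hps ξ).tendsto_sum_nat
    have a2 := a1.const_sub ξ
    refine a2.congr fun N => ?_
    have := congrArg (fun A : H →L[ℂ] H => A ξ) (hsum N)
    simp only [_root_.sum_apply] at this
    rw [this]; simp
  have uq : u * (1 - p) = 1 - p := by
    ext ξ
    have a1 := (lim ξ).comp (tendsto_add_atTop_nat 1)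
    have a2 := (u.continuous.tendsto _).comp (lim ξ)
    refine tendsto_nhds_unique (a2.congr fun N => ?_) a1
    exact (congrArg (fun A : H →L[ℂ] H => A ξ) (pow_succ' u N)).symm
  have unq : ∀ n, u ^ n * (1 - p) = 1 - p := fun n => by
    induction n with
    | zero => simp
    | succ n ih => rw [pow_succ, mul_assoc, uq, ih]
  have qq : (1 - p) * (1 - p) = 1 - p := by
    ext ξ
    refine tendsto_nhds_unique (lim ((1 - p) ξ)) (tendsto_const_nhds.congr fun N => ?_)
    exact (congrArg (fun A : H →L[ℂ] H => A ξ) (unq N)).symm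
  have pp : p * p = p := by
    have : (1 - p) * (1 - p) = 1 - p - p + p * p := by noncomm_ring
    rw [this, sub_add, sub_eq_self, sub_eq_zero] at qq
    exact qq.symm
  have hq : h * (1 - p) = 0 := by
    have : h = 1 - u := by rw [hu]; abel
    rw [this, sub_mul, one_mul, uq, sub_self]
  have hp : h * p = h := by
    rw [mul_sub, mul_one, sub_eq_zero] at hq; exact hq.symm
  have psa : IsSelfAdjoint p := .of_nonneg hp0
  have ph : p * h = h := by
    have := congrArg star hp
    rwa [star_mul, psa.star_eq, (IsSelfAdjoint.of_nonneg hh.2).star_eq] at this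
  have hlep : h ≤ p := by
    have := star_left_conjugate_le_conjugate h1 p
    rwa [psa.star_eq, ph, hp, mul_one, pp] at this
  refine ⟨p, ⟨hpM, psa, pp⟩, schroeder_bernstein (KS.of_le hh hlep) ?_⟩
  obtain ⟨c, r, hc, hr, hcr⟩ := KE.riesz_two hh hh idem
  obtain ⟨f, hf, hfl⟩ := exists_copies hr.right hcr hc
  have key : ∀ n, ∃ e, KE M (d n) e ∧ e ≤ f n := fun n => by
    have e0 : KE M (d n + (h - d n)) (f n) := by
      rw [add_sub_cancel]; exact hr.trans (hf n)
    obtain ⟨a, b, ha, hb, hab⟩ := KE.riesz_two (hd n) (hdh n) e0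
    exact ⟨a, ha, by rw [hab]; exact le_add_of_nonneg_right hb.right.2⟩
  choose e he hef using key
  obtain ⟨D, hDM, hD0, hDh, hDs⟩ := exists_strong_sum (M := M) (a := e) (h := h)
    (fun n => (he n).right.1) (fun n => (he n).right.2)
    (fun F => (Finset.sum_le_sum fun i _ => hef i).trans (hfl F))
  exact ⟨D, KE.sum he hpP ⟨hDM, hD0⟩ hps hDs, hDh⟩

lemma final {h : H →L[ℂ] H} (hh : MPos M h) (idem : KE M (h + h) h) :
    ∃ p, IsProjIn M p ∧ KE M h p := by
  have pw : ∀ n : ℕ, KE M (((((2 : ℝ) ^ n : ℝ)) : ℂ) • h) h := fun n => by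
    induction n with
    | zero => simpa using KE.refl hh
    | succ n ih =>
      have : ((((2 : ℝ) ^ (n + 1) : ℝ)) : ℂ) • h
          = ((((2 : ℝ) ^ n : ℝ)) : ℂ) • h + ((((2 : ℝ) ^ n : ℝ)) : ℂ) • h := by
        rw [← add_smul]; congr 1; push_cast; ring
      rw [this]
      exact (ih.add ih).trans idem
  obtain ⟨n, hn⟩ := pow_unbounded_of_one_lt ‖h‖ (one_lt_two (α := ℝ))
  set c : ℝ := ((2 : ℝ) ^ n)⁻¹ with hc
  have hc0 : 0 ≤ c := by positivity
  have e1 : KE M h ((c : ℂ) • h) := by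
    have := (pw n).smul hc0
    rwa [smul_smul, ← Complex.ofReal_mul, hc, inv_mul_cancel₀ (by positivity), Complex.ofReal_one,
      one_smul] at this
  have e2 : KE M ((c : ℂ) • h + (c : ℂ) • h) ((c : ℂ) • h) := by
    rw [← smul_add]; exact idem.smul hc0
  have le1 : (c : ℂ) • h ≤ 1 := by
    rw [le_iff_qf (.of_nonneg e1.right.2) (.one _)]
    intro ξ
    rw [qf_smul]
    have a1 : qf (1 : H →L[ℂ] H) ξ = ‖ξ‖ ^ 2 := inner_self_eq_norm_sq (𝕜 := ℂ) ξ
    have a2 : qf h ξ ≤ ‖h‖ * ‖ξ‖ ^ 2 := by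
      calc qf h ξ ≤ ‖inner ℂ (h ξ) ξ‖ := Complex.re_le_norm _
        _ ≤ ‖h ξ‖ * ‖ξ‖ := norm_inner_le_norm _ _
        _ ≤ ‖h‖ * ‖ξ‖ * ‖ξ‖ := by gcongr; exact h.le_opNorm ξ
        _ = ‖h‖ * ‖ξ‖ ^ 2 := by ring
    rw [a1, hc, inv_mul_le_iff₀ (by positivity)]
    exact a2.trans (by gcongr)
  obtain ⟨p, hp, e⟩ := to_proj e1.right e2 le1
  exact ⟨p, hp, e1.trans e⟩


end KPHelpers

/-- Every properly infinite positive element `h` of a von Neumann algebra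
`M` is Kadison–Pedersen equivalent to a projection: there is `p ∈ P(M)` with `h ≈ p`. -/
theorem kp_properlyInfinite_equiv_proj (M : VonNeumannAlgebra H) (h : H →L[ℂ] H)
    (hh : h ∈ M) (hpos : h.IsPositive) (hinf : KPProperlyInfinite M h) :
    ∃ p, IsProjIn M p ∧ KPEquiv M h p := by
  have hP : MPos M h := ⟨hh, (nonneg_iff_isPositive _).2 hpos⟩
  obtain ⟨p, hp, e⟩ := final hP (double hP hinf.2)
  exact ⟨p, hp, e.toKP⟩
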